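/- Let G be a finite group of order n, let S ⊂ G^n be the set of tuples that are bijections {1,…,n} → G, and let ρ = ρ₁ ⊗ ⋯ ⊗ ρ_n be an irreducible unitary representation of G^n with exactly m nontrivial factors, where m ≤ n/2. Then the operator norm of the Fourier coefficient 1̂_S(ρ) = n^{-n} ∑_{x ∈ S} ρ(x) satisfies ‖1̂_S(ρ)‖_op ≤ C(n,m)^{−1/2} · n!/n^n, where C(n,m) is the binomial coefficient n choose m. -/

import Mathlib

/-!
Write `T = ∑ R(x)`, summed over bijections `x : ι → G`, where `R = ⨂ ρᵢ`; the claim is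
`‖T‖ ≤ n! b_m` with `b_m = C(n,m)^{-1/2}`. Let `ρₐ` be one of the `m` nontrivial factors. Since
`∑_g ρₐ(g) = 0`, letting the value at `a` run over all of `G` gives (`bijSum_recursion`)
`(n - m + 1) T = - ∑_j T_j`, where `j` ranges over the other `m - 1` nontrivial coordinates and `T_j`
is the operator obtained by putting the diagonal representation `ρⱼ ⊗ ρₐ` at `j` and the trivial
one at `a`. Split `ρⱼ ⊗ ρₐ` into its fixed vectors and their orthogonal complement. On these two
pieces, which `T_j` keeps orthogonal, `T_j` is an operator of the same kind of sparsity `m - 2` and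
`m - 1`, so induction gives `‖T_j‖ ≤ n! max(b_{m-2}, b_{m-1})`. For `2m ≤ n` the maximum is `b_{m-2}`
(`inv_sqrt_choose_le`), and `(m - 1) b_{m-2} ≤ (n - m + 1) b_m` (`choose_step`) closes the induction.

To avoid decomposing tensor products, the induction (`norm_bijSum_le`) is carried out for an
arbitrary isometric action `R` of `G^ι` on an inner product space and a single vector `v`, which is
fixed by the coordinates outside a set `s` of size `m` and averaged to zero by those in `s`. Merging
two coordinates is then precomposition of `R` with an endomorphism of `G^ι`.
-/

/-! ### Isometric actions of `G^ι` and the merging recursion -/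

/-- The sum of the operators `R x` over all bijections `x : ι ≃ G`; for `R = ρ₁ ⊗ ⋯ ⊗ ρₙ` it is
`nⁿ` times the Fourier coefficient of the set of bijections. -/
noncomputable def bijSum {ι G H : Type*} [Fintype ι] [DecidableEq ι] [Fintype G] [DecidableEq G]
    [Group G] [NormedAddCommGroup H] [InnerProductSpace ℂ H]
    (R : (ι → G) →* (H →L[ℂ] H)) : H →L[ℂ] H :=
  ∑ e : ι ≃ G, R e

/-- The sum of `R` over the `i`-th coordinate copy of `G` in `G^ι`: it is `|G|` times the
projection to the vectors fixed by this copy, and it vanishes exactly where the `i`-th factor has no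
trivial component. -/
noncomputable def coordSum {ι G H : Type*} [DecidableEq ι] [Fintype G]
    [Group G] [NormedAddCommGroup H] [InnerProductSpace ℂ H]
    (R : (ι → G) →* (H →L[ℂ] H)) (i : ι) : H →L[ℂ] H :=
  ∑ g : G, R (Pi.mulSingle i g)

/-- The endomorphism of `G^ι` overwriting the `a`-th coordinate by the `j`-th one. Precomposing
`⨂ ρᵢ` with it replaces `ρⱼ` by the diagonal representation `ρⱼ ⊗ ρₐ` and `ρₐ` by a trivial one. -/
def mergeHom {ι : Type*} (G : Type*) [DecidableEq ι] [Group G] (a j : ι) :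
    (ι → G) →* (ι → G) where
  toFun x := Function.update x a (x j)
  map_one' := by
    ext i; by_cases h : i = a <;> simp [Function.update_apply]
  map_mul' x y := by
    ext i; by_cases h : i = a <;> simp [h]

section Operators

variable {ι G H : Type*} [DecidableEq ι] [Fintype G] [Group G]
    [NormedAddCommGroup H] [InnerProductSpace ℂ H]

lemma coordSum_comm (R : (ι → G) →* (H →L[ℂ] H)) (i : ι) (x : ι → G) (v : H) :
    coordSum R i (R x v) = R x (coordSum R i v) := by
  have key : ∀ g : G, R x (R (Pi.mulSingle i g) v)
      = R (Pi.mulSingle i (x i * g * (x i)⁻¹)) (R x v) := by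
    intro g
    have : x * Pi.mulSingle i g = Pi.mulSingle i (x i * g * (x i)⁻¹) * x := by
      ext k
      by_cases h : k = i
      · subst h; simp
      · simp [h]
    rw [← mul_apply_eq_comp, ← map_mul, this, map_mul, mul_apply_eq_comp]
  simp only [coordSum, sum_apply, map_sum, key]
  exact (Equiv.sum_comp (MulAut.conj (x i)).toEquiv
    (fun g => R (Pi.mulSingle i g) (R x v))).symm

lemma coordSum_bijSum [Fintype ι] [DecidableEq G] (R : (ι → G) →* (H →L[ℂ] H)) (i : ι) (v : H) :
    coordSum R i (bijSum R v) = bijSum R (coordSum R i v) := by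
  simp only [bijSum, sum_apply, map_sum, coordSum_comm]

lemma mulSingle_coordSum (R : (ι → G) →* (H →L[ℂ] H)) (i : ι) (h : G) (v : H) :
    R (Pi.mulSingle i h) (coordSum R i v) = coordSum R i v := by
  simp only [coordSum, sum_apply, map_sum]
  rw [← Equiv.sum_comp (Equiv.mulLeft h) (fun g => R (Pi.mulSingle i g) v)]
  refine Finset.sum_congr rfl fun g _ => ?_
  rw [← mul_apply_eq_comp, ← map_mul, ← Pi.mulSingle_mul]
  rfl

/-- If each `R x` is isometric, the vectors fixed by the `i`-th copy of `G` are orthogonal to those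
on which this copy averages to zero. -/
lemma inner_eq_zero_of_coordSum (R : (ι → G) →* (H →L[ℂ] H))
    (hR : ∀ x u v, inner ℂ (R x u) (R x v) = inner ℂ u v) (i : ι) {z y : H}
    (hz : ∀ g, R (Pi.mulSingle i g) z = z) (hy : coordSum R i y = 0) :
    inner ℂ z y = 0 := by
  have h : ∑ g : G, inner ℂ z (R (Pi.mulSingle i g) y) = 0 := by
    rw [← inner_sum, ← sum_apply]
    change inner ℂ z (coordSum R i y) = 0
    rw [hy, inner_zero_right]
  have h2 : ∀ g : G, inner ℂ z (R (Pi.mulSingle i g) y) = inner ℂ z y := by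
    intro g
    conv_lhs => rw [← hz g]
    exact hR _ _ _
  simpa [h2] using h

/-- Summing the relation `∑ g, R (mulSingle a g) v = 0` over bijections: letting the value at `a` run
through all of `G`, a value taken at a coordinate outside `s` is again attained by a bijection, and
a value taken at `j ∈ s` merges the coordinates `a` and `j`. -/
lemma bijSum_recursion [Fintype ι] [DecidableEq G] (R : (ι → G) →* (H →L[ℂ] H)) (s : Finset ι) (v : H)
    (htriv : ∀ i ∉ s, ∀ g, R (Pi.mulSingle i g) v = v) (a : ι) (ha : a ∈ s)
    (hz : coordSum R a v = 0) :
    (((s.erase a)ᶜ).card : ℂ) • bijSum R v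
      = - ∑ j ∈ s.erase a, bijSum (R.comp (mergeHom G a j)) v := by
  have h1 : ∀ e : ι ≃ G, ∑ k : ι, R (mergeHom G a k e) v = 0 := by
    intro e
    have : ∀ k : ι, R (mergeHom G a k e) v
        = (fun g => R (Function.update (e : ι → G) a 1) (R (Pi.mulSingle a g) v)) (e k) := by
      intro k
      have h : mergeHom G a k e = Function.update (e : ι → G) a 1 * Pi.mulSingle a (e k) := by
        ext l
        by_cases hl : l = a
        · subst hl; simp [mergeHom]
        · simp [mergeHom, hl]
      rw [h, map_mul]; rfl
    rw [Finset.sum_congr rfl fun k _ => this k,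
      Equiv.sum_comp e (fun g => R (Function.update (e : ι → G) a 1) (R (Pi.mulSingle a g) v)),
      ← map_sum, ← sum_apply]
    change R _ (coordSum R a v) = 0
    rw [hz, map_zero]
  have h2 : ∀ k ∈ (s.erase a)ᶜ, ∑ e : ι ≃ G, R (mergeHom G a k e) v = bijSum R v := by
    intro k hk
    have hperm : ∀ e : ι ≃ G, R (mergeHom G a k e) v = R ((Equiv.swap a k).trans e) v := by
      intro e
      by_cases hka : k = a
      · subst hka
        simp [mergeHom]
      · have hks : k ∉ s := by
          intro h; simp [hka, h] at hk
        have h : (((Equiv.swap a k).trans e : ι ≃ G) : ι → G)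
            = mergeHom G a k e * Pi.mulSingle k ((e k)⁻¹ * e a) := by
          ext l
          by_cases hl : l = a
          · subst hl
            simp [mergeHom, Ne.symm hka]
          · by_cases hlk : l = k
            · subst hlk
              simp [mergeHom, hl]
            · simp [mergeHom, hl, hlk, Equiv.swap_apply_of_ne_of_ne]
        rw [h, map_mul, mul_apply_eq_comp, htriv k hks]
    rw [Finset.sum_congr rfl fun e _ => hperm e, bijSum, sum_apply]
    exact Fintype.sum_equiv ((Equiv.swap a k).equivCongr (Equiv.refl G)) _ _ (fun e => by
      simp [Equiv.equivCongr])
  have h3 : ∑ k : ι, ∑ e : ι ≃ G, R (mergeHom G a k e) v = 0 := by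
    rw [Finset.sum_comm]; exact Finset.sum_eq_zero fun e _ => h1 e
  rw [← Finset.sum_add_sum_compl (s.erase a), Finset.sum_congr rfl h2, Finset.sum_const,
    ← Nat.cast_smul_eq_nsmul ℂ] at h3
  rw [eq_neg_iff_add_eq_zero, add_comm, ← h3]
  simp [bijSum]

end Operators

/-! ### Binomial inequalities -/

lemma choose_step (n k : ℕ) (h : 2 * (k + 2) ≤ n) :
    ((k : ℝ) + 1) / √(n.choose k) ≤ ((n : ℝ) - k - 1) / √(n.choose (k + 2)) := by
  obtain ⟨r, rfl⟩ : ∃ r, n = k + 2 + r := ⟨n - (k + 2), by omega⟩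
  have hc0 : (0 : ℝ) < (k + 2 + r).choose k := by exact_mod_cast Nat.choose_pos (by omega)
  have hc2 : (0 : ℝ) < (k + 2 + r).choose (k + 2) := by exact_mod_cast Nat.choose_pos (by omega)
  have e1 := Nat.choose_succ_right_eq (k + 2 + r) k
  have e2 := Nat.choose_succ_right_eq (k + 2 + r) (k + 1)
  have s1 : k + 2 + r - k = r + 2 := by omega
  have s2 : k + 2 + r - (k + 1) = r + 1 := by omega
  rw [s1] at e1
  rw [s2] at e2
  have e : ((k + 2 + r).choose (k + 2) : ℝ) * ((k + 2) * (k + 1))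
      = (k + 2 + r).choose k * ((r + 2) * (r + 1)) := by
    have e1' : ((k + 2 + r).choose (k + 1) : ℝ) * (k + 1) = (k + 2 + r).choose k * (r + 2) := by
      exact_mod_cast e1
    have e2' : ((k + 2 + r).choose (k + 2) : ℝ) * (k + 2)
        = (k + 2 + r).choose (k + 1) * (r + 1) := by exact_mod_cast e2
    linear_combination (k + 1 : ℝ) * e2' + (r + 1 : ℝ) * e1'
  have hkr : (k : ℝ) + 2 ≤ r := by exact_mod_cast (by omega : k + 2 ≤ r)
  have hk0 : (0 : ℝ) ≤ k := Nat.cast_nonneg k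
  have hn : (((k + 2 + r : ℕ) : ℝ) - k - 1) = r + 1 := by push_cast; ring
  rw [hn, div_le_div_iff₀ (Real.sqrt_pos.2 hc0) (Real.sqrt_pos.2 hc2)]
  apply le_of_sq_le_sq _ (by positivity)
  rw [mul_pow, mul_pow, Real.sq_sqrt hc2.le, Real.sq_sqrt hc0.le]
  generalize ((k + 2 + r).choose (k + 2) : ℝ) = A at *
  generalize ((k + 2 + r).choose k : ℝ) = B at *
  -- Clear the ratio `A / B = (r + 2) (r + 1) / ((k + 2) (k + 1))`.
  have hp : (0 : ℝ) < k + 2 := by positivity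
  refine le_of_mul_le_mul_left ?_ hp
  have : (k + 2 : ℝ) * ((k + 1) ^ 2 * A) = (k + 1) * (B * ((r + 2) * (r + 1))) := by
    rw [← e]; ring
  rw [this]
  have h4 : ((k : ℝ) + 1) * (r + 2) ≤ (k + 2) * (r + 1) := by nlinarith
  have h5 : (0 : ℝ) ≤ B * (r + 1) := by positivity
  nlinarith [mul_le_mul_of_nonneg_right h4 h5]

lemma inv_sqrt_choose_le (n k : ℕ) (h : 2 * (k + 1) ≤ n) :
    1 / √(n.choose (k + 1)) ≤ 1 / √(n.choose k) := by
  have h0 : (0 : ℝ) < n.choose k := by exact_mod_cast Nat.choose_pos (by omega)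
  apply one_div_le_one_div_of_le (Real.sqrt_pos.2 h0)
  apply Real.sqrt_le_sqrt
  exact_mod_cast Nat.choose_le_succ_of_lt_half_left (by omega)

/-! ### Induction on the sparsity -/

/-- The estimate for a single vector `v`, in the form that passes through the induction on `m`: the
coordinates outside `s` fix `v`, those in `s` average it to zero. -/
theorem norm_bijSum_le {ι G H : Type*} [Fintype ι] [DecidableEq ι] [Fintype G] [DecidableEq G]
    [Group G] [NormedAddCommGroup H] [InnerProductSpace ℂ H]
    (hcard : Fintype.card ι = Fintype.card G) (m : ℕ) :
    ∀ (R : (ι → G) →* (H →L[ℂ] H))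
      (_ : ∀ x u v, inner ℂ (R x u) (R x v) = inner ℂ u v) (s : Finset ι) (v : H),
      (∀ i ∉ s, ∀ g, R (Pi.mulSingle i g) v = v) → (∀ i ∈ s, coordSum R i v = 0) →
      s.card = m → 2 * m ≤ Fintype.card ι →
      ‖bijSum R v‖ ≤ (Fintype.card ι).factorial * (1 / √((Fintype.card ι).choose m)) * ‖v‖ := by
  induction m using Nat.strong_induction_on with
  | _ m ih =>
  intro R hR s v htriv hzero hs hm
  have hnorm : ∀ x u, ‖R x u‖ = ‖u‖ := by
    intro x u
    rw [@norm_eq_sqrt_re_inner ℂ, hR, ← @norm_eq_sqrt_re_inner ℂ]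
  rcases m with _ | m
  · rw [bijSum, sum_apply]
    refine (norm_sum_le _ _).trans ?_
    have e : ι ≃ G := Fintype.equivOfCardEq hcard
    simp [hnorm, Fintype.card_equiv e]
  obtain ⟨a, ha⟩ : s.Nonempty := by rw [← Finset.card_pos]; omega
  have hrec := bijSum_recursion R s v htriv a ha (hzero a ha)
  have hca : (s.erase a).card = m := by rw [Finset.card_erase_of_mem ha]; omega
  rw [Finset.card_compl, hca] at hrec
  rcases m with _ | k
  · have he : s.erase a = ∅ := Finset.card_eq_zero.1 hca
    have : bijSum R v = 0 := by
      rw [he, Finset.sum_empty, neg_zero, smul_eq_zero] at hrec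
      refine hrec.resolve_left ?_
      have : Fintype.card ι - 0 ≠ 0 := by omega
      exact_mod_cast this
    rw [this, norm_zero]; positivity
  set N := Fintype.card ι with hN
  set B : ℝ := N.factorial * (1 / √(N.choose k)) with hB
  have hB0 : 0 ≤ B := by positivity
  -- Split `v = w + u` with `w` the part fixed by `ρⱼ ⊗ ρₐ`: for the merged action `w` has sparsity
  -- `k` and `u` has sparsity `k + 1`, and `bijSum` keeps the two parts orthogonal.
  have hterm : ∀ j ∈ s.erase a, ‖bijSum (R.comp (mergeHom G a j)) v‖ ≤ B * ‖v‖ := by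
    intro j hj
    have hja : j ≠ a := Finset.ne_of_mem_erase hj
    have hjs : j ∈ s := Finset.mem_of_mem_erase hj
    set Q := R.comp (mergeHom G a j) with hQ
    have hQR : ∀ x u v, inner ℂ (Q x u) (Q x v) = inner ℂ u v := fun x u v => hR _ u v
    have hG0 : (Fintype.card G : ℂ) ≠ 0 := by exact_mod_cast Fintype.card_ne_zero
    have hQa : ∀ g, Q (Pi.mulSingle a g) = 1 := by
      intro g
      have : mergeHom G a j (Pi.mulSingle a g) = 1 := by
        ext l
        by_cases hl : l = a
        · subst hl; simp [mergeHom, hja]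
        · simp [mergeHom, hl]
      rw [hQ, MonoidHom.comp_apply, this, map_one]
    have hQi : ∀ i, i ≠ a → i ≠ j → ∀ g, Q (Pi.mulSingle i g) = R (Pi.mulSingle i g) := by
      intro i hia hij g
      have : mergeHom G a j (Pi.mulSingle i g) = Pi.mulSingle i g := by
        ext l
        by_cases hl : l = a
        · subst hl; simp [mergeHom, hij.symm, hia.symm]
        · simp [mergeHom, hl]
      rw [hQ, MonoidHom.comp_apply, this]
    have hQc : ∀ i, i ≠ a → i ≠ j → coordSum Q i = coordSum R i := by
      intro i hia hij
      simp only [coordSum, hQi i hia hij]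
    have hcomm : ∀ i, coordSum Q i (coordSum Q j v) = coordSum Q j (coordSum Q i v) := by
      intro i
      simp only [coordSum, sum_apply (f := fun g => Q (Pi.mulSingle i g)),
        map_sum]
      exact Finset.sum_congr rfl fun g _ => (coordSum_comm Q j _ v).symm
    set w : H := (Fintype.card G : ℂ)⁻¹ • coordSum Q j v with hw
    set u : H := v - w with hu
    have hwfix : ∀ g, Q (Pi.mulSingle j g) w = w := by
      intro g; rw [hw, map_smul, mulSingle_coordSum]
    have hwsum : coordSum Q j w = coordSum Q j v := by
      have : coordSum Q j w = (Fintype.card G : ℂ) • w := by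
        simp only [coordSum, sum_apply]
        rw [Finset.sum_congr rfl fun g _ => hwfix g, Finset.sum_const, Finset.card_univ,
          Nat.cast_smul_eq_nsmul]
      rw [this, hw, smul_inv_smul₀ hG0]
    have hu0 : coordSum Q j u = 0 := by rw [hu, map_sub, hwsum, sub_self]
    have hwout : ∀ i ∉ s, ∀ g, Q (Pi.mulSingle i g) w = w := by
      intro i hi g
      have hia : i ≠ a := fun h => hi (h ▸ ha)
      have hij : i ≠ j := fun h => hi (h ▸ hjs)
      rw [hw, map_smul, ← coordSum_comm, hQi i hia hij, htriv i hi]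
    have hwin : ∀ i ∈ s, i ≠ a → i ≠ j → coordSum Q i w = 0 := by
      intro i hi hia hij
      rw [hw, map_smul, hcomm i, hQc i hia hij, hzero i hi, map_zero, smul_zero]
    have hbw : ‖bijSum Q w‖ ≤ B * ‖w‖ := by
      refine ih k (by omega) Q hQR ((s.erase a).erase j) w ?_ ?_ ?_ (by omega)
      · intro i hi g
        by_cases hia : i = a
        · subst hia; simp [hQa]
        by_cases hij : i = j
        · subst hij; exact hwfix g
        · exact hwout i (by simpa [hia, hij] using hi) g
      · intro i hi
        simp only [Finset.mem_erase] at hi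
        exact hwin i hi.2.2 hi.2.1 hi.1
      · rw [Finset.card_erase_of_mem hj, hca]; rfl
    have hbu : ‖bijSum Q u‖ ≤ B * ‖u‖ := by
      have := ih (k + 1) (by omega) Q hQR (s.erase a) u ?_ ?_ hca (by omega)
      · refine this.trans ?_
        rw [hB]
        gcongr _ * ?_ * _
        exact inv_sqrt_choose_le N k (by omega)
      · intro i hi g
        by_cases hia : i = a
        · subst hia; simp [hQa]
        have his : i ∉ s := by simpa [hia] using hi
        have hij : i ≠ j := fun h => his (h ▸ hjs)
        rw [hu, map_sub, hwout i his, hQi i hia hij, htriv i his]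
      · intro i hi
        simp only [Finset.mem_erase] at hi
        by_cases hij : i = j
        · subst hij; exact hu0
        · rw [hu, map_sub, hwin i hi.2 hi.1 hij, hQc i hi.1 hij, hzero i hi.2, sub_zero]
    have horth : inner ℂ w u = 0 := inner_eq_zero_of_coordSum Q hQR j hwfix hu0
    have horth' : inner ℂ (bijSum Q w) (bijSum Q u) = 0 := by
      refine inner_eq_zero_of_coordSum Q hQR j ?_ ?_
      · intro g
        rw [hw, map_smul, ← coordSum_bijSum, map_smul, mulSingle_coordSum]
      · rw [coordSum_bijSum, hu0, map_zero]
    have hv : v = w + u := by rw [hu]; abel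
    have p1 := norm_add_sq_eq_norm_sq_add_norm_sq_of_inner_eq_zero w u horth
    have p2 := norm_add_sq_eq_norm_sq_add_norm_sq_of_inner_eq_zero _ _ horth'
    rw [← map_add, ← hv] at p2
    rw [← hv] at p1
    apply le_of_sq_le_sq _ (by positivity)
    have q1 := mul_self_le_mul_self (norm_nonneg _) hbw
    have q2 := mul_self_le_mul_self (norm_nonneg _) hbu
    calc ‖bijSum Q v‖ ^ 2 ≤ B * ‖w‖ * (B * ‖w‖) + B * ‖u‖ * (B * ‖u‖) := by
          rw [sq, p2]; exact add_le_add q1 q2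
      _ = (B * ‖v‖) ^ 2 := by linear_combination (-B ^ 2) * p1
  have hsum := norm_sum_le_of_le _ hterm
  rw [Finset.sum_const, hca, nsmul_eq_mul, ← norm_neg, ← hrec, norm_smul, Complex.norm_natCast,
    Nat.cast_sub (by omega)] at hsum
  have hstep := choose_step N k hm
  have hpos : (0 : ℝ) < (N : ℝ) - ((k + 1 : ℕ) : ℝ) := by
    rw [sub_pos]; exact_mod_cast (by omega : k + 1 < N)
  refine le_of_mul_le_mul_left (hsum.trans ?_) hpos
  have hf : (0 : ℝ) ≤ N.factorial * ‖v‖ := by positivity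
  have := mul_le_mul_of_nonneg_right hstep hf
  calc _ = ((k : ℝ) + 1) / √(N.choose k) * (N.factorial * ‖v‖) := by rw [hB]; push_cast; ring
    _ ≤ _ := this
    _ = _ := by push_cast; ring

/-! ### Kronecker products of irreducible representations -/

section Kronecker

variable {ι : Type*} [Fintype ι] [DecidableEq ι] {G : Type*} [Group G] {d : ι → ℕ}

/-- The representation `⨂ ρᵢ` of `G^ι`, as Kronecker product matrices. -/
noncomputable def kron (ρ : ∀ i, G →* Matrix.unitaryGroup (Fin (d i)) ℂ) :
    (ι → G) →* Matrix (∀ i, Fin (d i)) (∀ i, Fin (d i)) ℂ where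
  toFun x := Matrix.of fun a b => ∏ i, (ρ i (x i) : Matrix (Fin (d i)) (Fin (d i)) ℂ) (a i) (b i)
  map_one' := by
    ext a b
    simp only [Matrix.of_apply, Pi.one_apply, map_one, OneMemClass.coe_one, Matrix.one_apply,
      Finset.prod_ite_zero, Finset.prod_const_one, Finset.mem_univ, true_imp_iff, funext_iff]
  map_mul' x y := by
    ext a b
    simp only [Matrix.of_apply, Pi.mul_apply, map_mul, Submonoid.coe_mul, Matrix.mul_apply,
      Finset.prod_univ_sum, Fintype.piFinset_univ, Finset.prod_mul_distrib]

lemma kron_star_mul (ρ : ∀ i, G →* Matrix.unitaryGroup (Fin (d i)) ℂ) (x : ι → G) :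
    star (kron ρ x) * kron ρ x = 1 := by
  have h : star (kron ρ x) = kron ρ x⁻¹ := by
    ext a b
    simp [kron, Matrix.star_apply]
  rw [h, ← map_mul, inv_mul_cancel, map_one]

lemma kron_mulSingle (ρ : ∀ i, G →* Matrix.unitaryGroup (Fin (d i)) ℂ) (i : ι) (g : G)
    (a b : ∀ i, Fin (d i)) :
    kron ρ (Pi.mulSingle i g) a b = (ρ i g : Matrix (Fin (d i)) (Fin (d i)) ℂ) (a i) (b i) *
      ∏ k ∈ Finset.univ.erase i, (1 : Matrix (Fin (d k)) (Fin (d k)) ℂ) (a k) (b k) := by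
  change ∏ k, _ = _
  rw [← Finset.mul_prod_erase _ _ (Finset.mem_univ i), Pi.mulSingle_eq_same]
  congr 1
  refine Finset.prod_congr rfl fun k hk => ?_
  rw [Pi.mulSingle_eq_of_ne (Finset.ne_of_mem_erase hk), map_one]; rfl

end Kronecker

/-- A nontrivial irreducible representation sums to zero, as its fixed vectors form a proper
invariant subspace. -/
lemma sum_rep_eq_zero {G : Type*} [Group G] [Fintype G] {d : ℕ}
    (ρ : G →* Matrix.unitaryGroup (Fin d) ℂ)
    (hirr : ∀ W : Submodule ℂ (Fin d → ℂ),
      (∀ (g : G) (x : Fin d → ℂ), x ∈ W →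
        ((ρ g : Matrix (Fin d) (Fin d) ℂ)).mulVec x ∈ W) → W = ⊥ ∨ W = ⊤)
    (hne : ∃ g : G, (ρ g : Matrix (Fin d) (Fin d) ℂ) ≠ 1) :
    ∑ g, (ρ g : Matrix (Fin d) (Fin d) ℂ) = 0 := by
  let W : Submodule ℂ (Fin d → ℂ) :=
    { carrier := {x | ∀ g, (ρ g : Matrix (Fin d) (Fin d) ℂ).mulVec x = x}
      add_mem' := fun {x y} hx hy g => by rw [Matrix.mulVec_add, hx g, hy g]
      zero_mem' := fun g => Matrix.mulVec_zero _
      smul_mem' := fun c x hx g => by rw [Matrix.mulVec_smul, hx g] }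
  have hWmem : ∀ x, x ∈ W ↔ ∀ g, (ρ g : Matrix (Fin d) (Fin d) ℂ).mulVec x = x := fun _ => Iff.rfl
  rcases hirr W (fun g x hx => by rwa [(hWmem x).1 hx g]) with h | h
  · refine Matrix.ext_iff_mulVec.2 fun x => ?_
    rw [Matrix.zero_mulVec, ← Submodule.mem_bot ℂ, ← h, hWmem]
    intro g
    rw [Matrix.mulVec_mulVec, Finset.mul_sum]
    congr 1
    rw [← Equiv.sum_comp (Equiv.mulLeft g) (fun k => (ρ k : Matrix (Fin d) (Fin d) ℂ))]
    exact Finset.sum_congr rfl fun k _ => by simp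
  · obtain ⟨g, hg⟩ := hne
    refine absurd ?_ hg
    refine Matrix.ext_iff_mulVec.2 fun x => ?_
    rw [Matrix.one_mulVec]
    exact (hWmem x).1 (h ▸ Submodule.mem_top) g

open Finset in
open Classical in
/-- Operator norm bound for the Fourier coefficient of the indicator of
bijections at an `m`-sparse irreducible representation
`ρ = ρ₁ ⊗ ⋯ ⊗ ρₙ` of `Gⁿ`, `m ≤ n/2`:
`‖1̂_S(ρ)‖_op ≤ (n choose m)^{-1/2} n!/nⁿ`.  The tensor product operator is
realized as the Kronecker-product matrix indexed by `∀ i, Fin (d i)`, acting on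
the corresponding Euclidean space. -/
theorem stmt_18 {G : Type*} [Group G] [Fintype G] (n : ℕ)
    (hn : Fintype.card G = n) (d : Fin n → ℕ)
    (ρ : ∀ i, G →* Matrix.unitaryGroup (Fin (d i)) ℂ)
    (hirr : ∀ i, ∀ W : Submodule ℂ (Fin (d i) → ℂ),
      (∀ (g : G) (x : Fin (d i) → ℂ), x ∈ W →
        ((ρ i g : Matrix (Fin (d i)) (Fin (d i)) ℂ)).mulVec x ∈ W) →
      W = ⊥ ∨ W = ⊤)
    (m : ℕ) (hm : 2 * m ≤ n)
    (hsparse : (Finset.univ.filter fun i =>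
      ∃ g : G, (ρ i g : Matrix (Fin (d i)) (Fin (d i)) ℂ) ≠ 1).card = m) :
    ‖Matrix.toEuclideanCLM (𝕜 := ℂ)
        (((n : ℂ) ^ n)⁻¹ •
          ∑ x ∈ Finset.univ.filter fun x : Fin n → G => Function.Injective x,
            Matrix.of (fun a b : ∀ i, Fin (d i) =>
              ∏ i, (ρ i (x i) : Matrix (Fin (d i)) (Fin (d i)) ℂ) (a i) (b i)))‖
      ≤ (n.factorial / (n : ℝ) ^ n) / Real.sqrt (n.choose m) := by
  have hcard : Fintype.card (Fin n) = Fintype.card G := by rw [Fintype.card_fin, hn]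
  let R : (Fin n → G) →* (EuclideanSpace ℂ (∀ i, Fin (d i)) →L[ℂ]
      EuclideanSpace ℂ (∀ i, Fin (d i))) :=
    ((Matrix.toEuclideanCLM (𝕜 := ℂ) (n := ∀ i, Fin (d i)) : _ →* _)).comp (kron ρ)
  have hRdef : ∀ x, R x = Matrix.toEuclideanCLM (𝕜 := ℂ) (kron ρ x) := fun x => rfl
  have hR : ∀ x u v, inner ℂ (R x u) (R x v) = inner ℂ u v := by
    intro x u v
    rw [← ContinuousLinearMap.adjoint_inner_right, ← ContinuousLinearMap.star_eq_adjoint,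
      ← mul_apply_eq_comp, hRdef, ← map_star, ← map_mul, kron_star_mul, map_one]
    rfl
  set s := Finset.univ.filter fun i =>
      ∃ g : G, (ρ i g : Matrix (Fin (d i)) (Fin (d i)) ℂ) ≠ 1 with hs
  have htriv : ∀ i ∉ s, ∀ g v, R (Pi.mulSingle i g) v = v := by
    intro i hi g v
    have h1 : (ρ i g : Matrix (Fin (d i)) (Fin (d i)) ℂ) = 1 := by
      by_contra h
      exact hi (by rw [hs, Finset.mem_filter]; exact ⟨Finset.mem_univ _, g, h⟩)
    have h2 : kron ρ (Pi.mulSingle i g) = 1 := by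
      rw [← map_one (kron ρ), ← Pi.mulSingle_one i]
      ext a b
      rw [kron_mulSingle, kron_mulSingle, h1, map_one]
      rfl
    rw [hRdef, h2, map_one]; rfl
  have hzero : ∀ i ∈ s, coordSum R i = 0 := by
    intro i hi
    have h0 := sum_rep_eq_zero (ρ i) (hirr i) (Finset.mem_filter.1 hi).2
    have h2 : ∑ g, kron ρ (Pi.mulSingle i g) = 0 := by
      ext a b
      rw [Matrix.sum_apply]
      simp only [kron_mulSingle]
      rw [← Finset.sum_mul, ← Matrix.sum_apply, h0, Matrix.zero_apply, zero_mul]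
      rfl
    simp only [coordSum, hRdef]
    rw [← map_sum, h2, map_zero]
  have hbij : ∑ x ∈ Finset.univ.filter fun x : Fin n → G => Function.Injective x, R x
      = bijSum R := by
    symm
    refine Finset.sum_bij (fun e _ => (e : Fin n → G)) ?_ ?_ ?_ ?_
    · intro e _
      simpa using e.injective
    · intro e _ f _ h
      exact DFunLike.coe_injective h
    · intro x hx
      have hx' : Function.Injective x := by simpa using hx
      exact ⟨Equiv.ofBijective x ((Fintype.bijective_iff_injective_and_card x).2 ⟨hx', hcard⟩),
        Finset.mem_univ _, rfl⟩
    · intro e _; rfl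
  have hmain : ‖bijSum R‖ ≤ n.factorial * (1 / √(n.choose m)) := by
    refine ContinuousLinearMap.opNorm_le_bound _ (by positivity) fun v => ?_
    have := norm_bijSum_le hcard m R hR s v (fun i hi g => htriv i hi g v)
      (fun i hi => by rw [hzero i hi]; rfl) hsparse (by rwa [Fintype.card_fin])
    rwa [Fintype.card_fin] at this
  rw [map_smul, map_sum]
  change ‖_ • ∑ x ∈ Finset.univ.filter fun x : Fin n → G => Function.Injective x, R x‖ ≤ _
  rw [hbij, norm_smul, norm_inv, norm_pow, Complex.norm_natCast]
  calc _ ≤ ((n : ℝ) ^ n)⁻¹ * (n.factorial * (1 / √(n.choose m))) := by gcongr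
    _ = _ := by ring
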